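/- arXiv:1701.04526 — 2 statements merged into one kernel-verified Lean document; each statement's English description precedes it below -/
import Mathlib

section
/- Let p ≡ 1 (mod 3) be prime and let η₃ be a multiplicative character of 𝔽_p^× of order 3. If λ ∈ 𝔽_p satisfies 1 + 2λ ≠ 0, then ₂𝔽₁[η₃, η₃²; ε; 1−λ³] = ₂𝔽₁[η₃, η₃²; ε; ((1−λ)/(1+2λ))³]. -/
open Finset

/-- Jacobi sum `J(A,B) = Σ_x A(x) B(1-x)`. -/
noncomputable def jacobiSum' {F : Type} [Field F] [Fintype F] (A B : MulChar F ℂ) : ℂ :=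
  ∑ x : F, A x * B (1 - x)

/-- One-variable finite-field period function `ℙ_D^{(1)}[A; B; C; λ]`. -/
noncomputable def P1 {F : Type} [Field F] [Fintype F] (A B C : MulChar F ℂ) (l : F) : ℂ :=
  ∑ y : F, A y * (C * A⁻¹) (1 - y) * B⁻¹ (1 - l * y)

/-- Two-variable finite-field Appell–Lauricella period function `ℙ_D^{(2)}`. -/
noncomputable def P2 {F : Type} [Field F] [Fintype F] (A B₁ B₂ C : MulChar F ℂ) (l₁ l₂ : F) : ℂ :=
  ∑ y : F, A y * (C * A⁻¹) (1 - y) * B₁⁻¹ (1 - l₁ * y) * B₂⁻¹ (1 - l₂ * y)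

/-- n-variable finite-field Appell–Lauricella period function `ℙ_D^{(n)}`. -/
noncomputable def PDn {F : Type} [Field F] [Fintype F] (n : ℕ) (A : MulChar F ℂ)
    (B : Fin n → MulChar F ℂ) (C : MulChar F ℂ) (l : Fin n → F) : ℂ :=
  ∑ y : F, A y * (C * A⁻¹) (1 - y) * ∏ i, (B i)⁻¹ (1 - l i * y)

/-- Normalized two-variable Appell–Lauricella function `𝔽_D^{(2)}`. -/
noncomputable def F2 {F : Type} [Field F] [Fintype F] (A B₁ B₂ C : MulChar F ℂ) (l₁ l₂ : F) : ℂ :=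
  P2 A B₁ B₂ C l₁ l₂ / jacobiSum' A (C * A⁻¹)

/-- Normalized n-variable Appell–Lauricella function `𝔽_D^{(n)}`. -/
noncomputable def FDn {F : Type} [Field F] [Fintype F] (n : ℕ) (A : MulChar F ℂ)
    (B : Fin n → MulChar F ℂ) (C : MulChar F ℂ) (l : Fin n → F) : ℂ :=
  PDn n A B C l / jacobiSum' A (C * A⁻¹)

/-- Finite-field Gauss hypergeometric function `₂𝔽₁[A,B;C;λ] = ℙ_D^{(1)}[B;A;C;λ]/J(B,C B̄)`. -/
noncomputable def twoF1 {F : Type} [Field F] [Fintype F] (A B C : MulChar F ℂ) (l : F) : ℂ :=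
  P1 B A C l / jacobiSum' B (C * B⁻¹)

open scoped Classical in
/-- `δ(x) = 1` if `x = 0`, else `0`. -/
noncomputable def deltaC {F : Type} [Field F] [Fintype F] (x : F) : ℂ :=
  if x = 0 then 1 else 0

noncomputable instance {F : Type} [Field F] [Fintype F] : Fintype (MulChar F ℂ) :=
  Fintype.ofFinite _

/-- Character binomial coefficient `(A choose χ) = -χ(-1) J(A, χ̄)`. -/
noncomputable def charBinom {F : Type} [Field F] [Fintype F] (A χ : MulChar F ℂ) : ℂ :=
  -χ (-1) * jacobiSum' A χ⁻¹


section CubicAux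

variable {F : Type} [Field F] [Fintype F] [DecidableEq F]

/-- Complex-valued quadratic character. -/
noncomputable def qc (a : F) : ℂ := ((quadraticChar F a : ℤ) : ℂ)

lemma qc_mul (a b : F) : qc (a * b) = qc a * qc b := by
  simp only [qc, map_mul, Int.cast_mul]

@[simp] lemma eta_zero (η : MulChar F ℂ) : η 0 = 0 := η.map_nonunit not_isUnit_zero

lemma qc_zero : qc (0 : F) = 0 := by simp [qc]

lemma qc_sq {a : F} (ha : a ≠ 0) : qc (a ^ 2) = 1 := by
  simp only [qc]; rw [quadraticChar_sq_one' ha]; simp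

lemma qc_sq_mul {a : F} (ha : a ≠ 0) (b : F) : qc (a ^ 2 * b) = qc b := by
  rw [qc_mul, qc_sq ha, one_mul]

lemma qc_eq_of_sq_mul {a : F} (ha : a ≠ 0) {b c : F} (h : c = a ^ 2 * b) : qc c = qc b := by
  rw [h, qc_sq_mul ha]

lemma ringChar_ne_two (h2 : (2 : F) ≠ 0) : ringChar F ≠ 2 := by
  intro h
  apply h2
  have := ringChar.Nat.cast_ringChar (R := F)
  rw [h] at this
  exact_mod_cast this

lemma qc_sum (h2 : (2 : F) ≠ 0) : ∑ a : F, qc a = 0 := by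
  have := quadraticChar_sum_zero (ringChar_ne_two h2)
  simp only [qc]
  exact_mod_cast this

/-- Number of roots of a quadratic. -/
lemma card_quad (h2 : (2 : F) ≠ 0) (a b c : F) (ha : a ≠ 0) :
    (∑ y : F, if a * y ^ 2 + b * y + c = 0 then (1 : ℂ) else 0)
      = 1 + qc (b ^ 2 - 4 * a * c) := by
  have h := quadraticChar_card_sqrts (ringChar_ne_two h2) (b ^ 2 - 4 * a * c)
  have h' : ((({x : F | x ^ 2 = b ^ 2 - 4 * a * c} : Set F).toFinset.card : ℤ) : ℂ)
      = 1 + qc (b ^ 2 - 4 * a * c) := by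
    rw [h]; simp [qc, add_comm]
  rw [← h']
  have e : (∑ y : F, if a * y ^ 2 + b * y + c = 0 then (1 : ℂ) else 0)
      = ∑ x : F, if x ^ 2 = b ^ 2 - 4 * a * c then (1 : ℂ) else 0 := by
    have h2a : 2 * a ≠ 0 := mul_ne_zero h2 ha
    have h4a : 4 * a ≠ 0 := by
      have : (4 : F) * a = 2 * (2 * a) := by ring
      rw [this]; exact mul_ne_zero h2 h2a
    refine Fintype.sum_equiv ((Equiv.mulLeft₀ (2 * a) h2a).trans (Equiv.addRight b)) _ _ ?_
    intro y
    have : (a * y ^ 2 + b * y + c = 0) ↔ ((2 * a * y + b) ^ 2 = b ^ 2 - 4 * a * c) := by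
      constructor
      · intro h; linear_combination 4 * a * h
      · intro h
        apply (mul_right_injective₀ h4a)
        simp only
        linear_combination h
    simp [this]
  rw [e, Finset.sum_boole]
  simp only [Set.toFinset_ofPred, Int.cast_natCast]

/-- `Σ_{u ≠ 0} G (u + 1/u)`. -/
lemma sum_joukowski (h2 : (2 : F) ≠ 0) (G : F → ℂ) :
    (∑ u : F, if u = 0 then 0 else G (u + u⁻¹)) = ∑ x : F, G x * (1 + qc (x ^ 2 - 4)) := by
  have key : ∀ x : F, G x * (1 + qc (x ^ 2 - 4)) =
      ∑ u : F, if u = 0 then 0 else if x = u + u⁻¹ then G x else 0 := by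
    intro x
    have := card_quad h2 1 (-x) 1 one_ne_zero
    rw [show (-x) ^ 2 - 4 * 1 * 1 = x ^ 2 - 4 by ring] at this
    rw [← this, Finset.mul_sum]
    refine Finset.sum_congr rfl fun u _ => ?_
    by_cases hu : u = 0
    · simp [hu]
    · have : (1 * u ^ 2 + -x * u + 1 = 0) ↔ x = u + u⁻¹ := by
        constructor
        · intro h; field_simp; linear_combination -h
        · intro h; rw [h]; field_simp; ring
      simp only [this, hu, if_false, mul_ite, mul_one, mul_zero]
  simp_rw [key]
  rw [Finset.sum_comm]
  refine Finset.sum_congr rfl fun u _ => ?_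
  by_cases hu : u = 0 <;> simp [hu]

lemma eta_cube (η : MulChar F ℂ) (hη : orderOf η = 3) {z : F} (hz : z ≠ 0) : η z ^ 3 = 1 := by
  have : η ^ 3 = 1 := by rw [← hη]; exact pow_orderOf_eq_one η
  rw [← MulChar.pow_apply' η (by norm_num), this]
  exact MulChar.one_apply hz.isUnit

lemma cube_of_eta (η : MulChar F ℂ) (hη : orderOf η = 3) {z : F} (hz : z ≠ 0)
    (h1 : η z = 1) : ∃ u : F, u ^ 3 = z := by
  obtain ⟨g, hg⟩ := IsCyclic.exists_generator (α := Fˣ)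
  obtain ⟨n, hn⟩ := (Submonoid.mem_powers_iff _ _).1 ((mem_powers_iff_mem_zpowers).2 (hg (Units.mk0 z hz)))
  have hzn : z = (g : F) ^ n := by
    have := congrArg (Units.val) hn
    simpa using this.symm
  have hg3 : η (g : F) ^ 3 = 1 := eta_cube η hη g.ne_zero
  have hg1 : η (g : F) ≠ 1 := by
    intro hh
    have : η = 1 := by
      ext a
      obtain ⟨m, hm⟩ := (Submonoid.mem_powers_iff _ _).1 ((mem_powers_iff_mem_zpowers).2 (hg a))
      rw [← hm]; simp [hh]
    rw [this] at hη; simp at hη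
  have hord : orderOf (η (g : F)) = 3 := by
    haveI : Fact (Nat.Prime 3) := ⟨Nat.prime_three⟩
    exact orderOf_eq_prime hg3 hg1
  have hn1 : η (g : F) ^ n = 1 := by rw [← map_pow, ← hzn, h1]
  obtain ⟨k, hk⟩ := (hord ▸ orderOf_dvd_of_pow_eq_one hn1 : 3 ∣ n)
  exact ⟨(g : F) ^ k, by rw [hzn, hk, ← pow_mul, mul_comm]⟩

lemma card_cube (η : MulChar F ℂ) (hη : orderOf η = 3) (h3 : (3 : F) ≠ 0)
    {w : F} (hw : w ^ 2 + w + 1 = 0) {z : F} (hz : z ≠ 0) :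
    (∑ u : F, if u ^ 3 = z then (1 : ℂ) else 0) = 1 + η z + η z ^ 2 := by
  have hz3 := eta_cube η hη hz
  have hw0 : w ≠ 0 := by rintro rfl; simp at hw
  have hw1 : w ≠ 1 := by rintro rfl; apply h3; linear_combination hw
  by_cases h : ∃ u : F, u ^ 3 = z
  · obtain ⟨u, rfl⟩ := h
    have hu : u ≠ 0 := by rintro rfl; simp at hz
    have hη1 : η (u ^ 3) = 1 := by rw [map_pow]; exact eta_cube η hη hu
    have hw3 : w ^ 3 = 1 := by linear_combination (w - 1) * hw
    have hset : (Finset.univ.filter fun v : F => v ^ 3 = u ^ 3) = {u, w * u, w ^ 2 * u} := by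
      ext v
      simp only [Finset.mem_filter, Finset.mem_univ, true_and, Finset.mem_insert,
        Finset.mem_singleton]
      constructor
      · intro hv
        have : (v - u) * ((v - w * u) * (v - w ^ 2 * u)) = 0 := by
          linear_combination hv + (-u * v ^ 2 + u ^ 2 * v + (w - 1) * (u ^ 2 * v - u ^ 3)) * hw
        rcases mul_eq_zero.1 this with h | h
        · left; linear_combination h
        · rcases mul_eq_zero.1 h with h | h
          · right; left; linear_combination h
          · right; right; linear_combination h
      · rintro (rfl | rfl | rfl)
        · rfl
        · linear_combination u ^ 3 * hw3
        · linear_combination u ^ 3 * (w ^ 3 + 1) * hw3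
    rw [Finset.sum_boole, hset, Finset.card_insert_of_notMem, Finset.card_insert_of_notMem,
      Finset.card_singleton, hη1]
    · norm_num
    · simp only [Finset.mem_singleton]
      intro h
      apply hw1
      have := mul_right_cancel₀ hu h
      have h' : w * w = w * 1 := by linear_combination -this
      exact mul_left_cancel₀ hw0 h'
    · simp only [Finset.mem_insert, Finset.mem_singleton, not_or]
      constructor
      · intro h
        apply hw1
        apply mul_right_cancel₀ hu
        linear_combination -h
      · intro h
        have : w ^ 2 = 1 := by
          apply mul_right_cancel₀ hu
          linear_combination -h
        apply hw1
        linear_combination hw3 - w * this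
  · have hne : η z ≠ 1 := fun h1 => h (cube_of_eta η hη hz h1)
    have h0 : 1 + η z + η z ^ 2 = 0 := by
      have : (η z - 1) * (1 + η z + η z ^ 2) = 0 := by linear_combination hz3
      exact (mul_eq_zero.1 this).resolve_left (sub_ne_zero.2 hne)
    rw [h0]
    exact Finset.sum_eq_zero fun u _ => if_neg fun hu => h ⟨u, hu⟩

lemma sum_cube (η : MulChar F ℂ) (hη : orderOf η = 3) (h3 : (3 : F) ≠ 0)
    {w : F} (hw : w ^ 2 + w + 1 = 0) (G : F → ℂ) :
    (∑ u : F, if u = 0 then 0 else G (u ^ 3))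
      = ∑ z : F, if z = 0 then 0 else (1 + η z + η z ^ 2) * G z := by
  have key : ∀ z : F, (if z = 0 then 0 else (1 + η z + η z ^ 2) * G z) =
      ∑ u : F, if u = 0 then 0 else if z = u ^ 3 then G z else 0 := by
    intro z
    by_cases hz : z = 0
    · subst hz
      rw [if_pos rfl]
      symm
      apply Finset.sum_eq_zero
      intro u _
      by_cases hu : u = 0
      · simp [hu]
      · have : ¬ (0 = u ^ 3) := fun h => hu (pow_eq_zero_iff (by norm_num) |>.1 h.symm)
        simp [this]
    · rw [if_neg hz, ← card_cube η hη h3 hw hz, Finset.sum_mul]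
      refine Finset.sum_congr rfl fun u _ => ?_
      by_cases hu : u = 0
      · subst hu
        have : ¬ ((0 : F) ^ 3 = z) := by
          intro h; apply hz; rw [← h]; simp
        rw [if_neg this]; simp
      · simp [hu, eq_comm]
  simp_rw [key]
  rw [Finset.sum_comm]
  refine Finset.sum_congr rfl fun u _ => ?_
  by_cases hu : u = 0 <;> simp [hu]

lemma eta_inv (η : MulChar F ℂ) (hη : orderOf η = 3) {z : F} (hz : z ≠ 0) :
    η z⁻¹ = η z ^ 2 := by
  have h1 : η z⁻¹ * η z = 1 := by rw [← map_mul, inv_mul_cancel₀ hz, map_one]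
  have h3 := eta_cube η hη hz
  have : η z ≠ 0 := right_ne_zero_of_mul_eq_one h1
  apply mul_right_cancel₀ this
  rw [h1, ← h3]; ring

/-- The cubic Chebyshev map permutes the `x` with `x ^ 2 - 4` a nonsquare. -/
lemma sum_cheb (h2 : (2 : F) ≠ 0) (h3 : (3 : F) ≠ 0)
    {w : F} (hw : w ^ 2 + w + 1 = 0) (f : F → ℂ) :
    ∑ x ∈ Finset.univ.filter (fun x : F => ¬ IsSquare (x ^ 2 - 4)), f (x ^ 3 - 3 * x)
      = ∑ x ∈ Finset.univ.filter (fun x : F => ¬ IsSquare (x ^ 2 - 4)), f x := by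
  classical
  have hs : (2 * w + 1) ^ 2 = -3 := by linear_combination 4 * hw
  have hs0 : 2 * w + 1 ≠ 0 := by
    intro h; rw [h] at hs; apply h3; linear_combination hs
  set M := Finset.univ.filter (fun x : F => ¬ IsSquare (x ^ 2 - 4)) with hM
  have hmem : ∀ x : F, x ∈ M ↔ ¬ IsSquare (x ^ 2 - 4) := by intro x; simp [hM]
  have hmaps : ∀ x ∈ M, x ^ 3 - 3 * x ∈ M := by
    intro x hx
    rw [hmem] at hx ⊢
    have h1 : x ^ 2 - 1 ≠ 0 := by
      intro h
      apply hx
      exact ⟨2 * w + 1, by linear_combination h - hs⟩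
    rintro ⟨r, hr⟩
    apply hx
    refine ⟨r / (x ^ 2 - 1), ?_⟩
    field_simp
    linear_combination hr
  have hinj : ∀ x ∈ M, ∀ y ∈ M, x ^ 3 - 3 * x = y ^ 3 - 3 * y → x = y := by
    intro x _ y hy h
    by_contra hne
    rw [hmem] at hy
    apply hy
    have h' : x ^ 2 + x * y + y ^ 2 - 3 = 0 := by
      apply (mul_eq_zero.1 (?_ : (x - y) * (x ^ 2 + x * y + y ^ 2 - 3) = 0)).resolve_left
        (sub_ne_zero.2 hne)
      linear_combination h
    refine ⟨(2 * x + y) / (2 * w + 1), ?_⟩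
    field_simp
    linear_combination (y ^ 2 - 4) * hs - 4 * h'
  have himg : M.image (fun x => x ^ 3 - 3 * x) = M := by
    apply Finset.eq_of_subset_of_card_le
    · intro y hy
      obtain ⟨x, hx, rfl⟩ := Finset.mem_image.1 hy
      exact hmaps x hx
    · rw [Finset.card_image_of_injOn]
      intro x hx y hy h
      exact hinj x hx y hy h
  conv_rhs => rw [← himg]
  rw [Finset.sum_image]
  intro x hx y hy h
  exact hinj x hx y hy h

/-- Cardano: a twisted sum over `z + 1/z` in terms of the cubic `x ^ 3 - 3 x`. -/
lemma cardano (η : MulChar F ℂ) (hη : orderOf η = 3) (h2 : (2 : F) ≠ 0) (h3 : (3 : F) ≠ 0)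
    {w : F} (hw : w ^ 2 + w + 1 = 0) (f : F → ℂ) :
    ∑ z : F, η z * f (z + z⁻¹) = ∑ x : F, f (x ^ 3 - 3 * x) - ∑ x : F, f x := by
  have e1 := sum_cube η hη h3 hw (fun z => f (z + z⁻¹))
  have e2 := sum_joukowski h2 (fun x => f (x ^ 3 - 3 * x))
  have e3 := sum_joukowski h2 f
  have e4 : (∑ u : F, if u = 0 then 0 else f (u ^ 3 + (u ^ 3)⁻¹))
      = ∑ u : F, if u = 0 then 0 else f ((u + u⁻¹) ^ 3 - 3 * (u + u⁻¹)) := by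
    refine Finset.sum_congr rfl fun u _ => ?_
    by_cases hu : u = 0
    · simp [hu]
    · rw [if_neg hu, if_neg hu]
      congr 1
      field_simp
      ring
  have e5 : (∑ z : F, if z = 0 then 0 else (1 + η z + η z ^ 2) * f (z + z⁻¹))
      = (∑ z : F, if z = 0 then 0 else f (z + z⁻¹)) + ∑ z : F, η z * f (z + z⁻¹)
        + ∑ z : F, η z⁻¹ * f (z + z⁻¹) := by
    rw [← Finset.sum_add_distrib, ← Finset.sum_add_distrib]
    refine Finset.sum_congr rfl fun z _ => ?_
    by_cases hz : z = 0
    · simp [hz]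
    · rw [if_neg hz, if_neg hz, eta_inv η hη hz]; ring
  have e6 : ∑ z : F, η z⁻¹ * f (z + z⁻¹) = ∑ z : F, η z * f (z + z⁻¹) := by
    refine Fintype.sum_equiv (Equiv.inv F) _ _ ?_
    intro z
    simp [add_comm]
  have e7 : ∑ x : F, (f (x ^ 3 - 3 * x) - f x) * qc (x ^ 2 - 4)
      = ∑ x : F, (f (x ^ 3 - 3 * x) - f x) := by
    have hM := sum_cheb h2 h3 hw f
    rw [← sub_eq_zero, ← Finset.sum_sub_distrib, Finset.sum_filter] at hM
    have : ∀ x : F, (f (x ^ 3 - 3 * x) - f x) * qc (x ^ 2 - 4)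
        = (f (x ^ 3 - 3 * x) - f x)
          - 2 * (if ¬ IsSquare (x ^ 2 - 4) then f (x ^ 3 - 3 * x) - f x else 0) := by
      intro x
      by_cases h0 : x ^ 2 - 4 = 0
      · have : x ^ 3 - 3 * x = x := by linear_combination x * h0
        simp [this]
      · by_cases hsq : IsSquare (x ^ 2 - 4)
        · obtain ⟨r, hr⟩ := id hsq
          have hr0 : r ≠ 0 := by rintro rfl; apply h0; rw [hr]; simp
          have : qc (x ^ 2 - 4) = 1 := by rw [hr, ← sq]; exact qc_sq hr0
          simp [this, hsq]
        · have : qc (x ^ 2 - 4) = -1 := by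
            have := (quadraticChar_neg_one_iff_not_isSquare (F := F) (a := x ^ 2 - 4)).2 hsq
            simp [qc, this]
          simp [this, hsq]; ring
    simp_rw [this]
    rw [Finset.sum_sub_distrib, ← Finset.mul_sum, hM]; simp
  have e8 : ∑ x : F, f (x ^ 3 - 3 * x) * (1 + qc (x ^ 2 - 4)) - ∑ x : F, f x * (1 + qc (x ^ 2 - 4))
      = 2 * (∑ x : F, f (x ^ 3 - 3 * x) - ∑ x : F, f x) := by
    rw [two_mul, ← Finset.sum_sub_distrib, ← Finset.sum_sub_distrib]
    nth_rewrite 2 [← e7]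
    rw [← Finset.sum_add_distrib]
    exact Finset.sum_congr rfl fun x _ => by ring
  rw [e4, e5, e6, e2, e3] at e1
  linear_combination (1 / 2 : ℂ) * (e8 - e1)

/-- The basic sum. -/
noncomputable def Ssum (η : MulChar F ℂ) (t : F) : ℂ :=
  ∑ y : F, η (y ^ 2 * (1 - y) * (1 - t * y) ^ 2)

lemma eta_sum (η : MulChar F ℂ) (hη : orderOf η = 3) : ∑ z : F, η z = 0 := by
  apply MulChar.sum_eq_zero_of_ne_one
  rintro rfl
  simp at hη

lemma Ssum_quad (η : MulChar F ℂ) (hη : orderOf η = 3) (h2 : (2 : F) ≠ 0)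
    {t : F} (ht0 : t ≠ 0) (ht1 : t ≠ 1) :
    Ssum η t = ∑ z : F, η z * qc ((z + 1) ^ 2 - 4 * t * z) := by
  have key : ∀ z : F, η z * (1 + qc ((z + 1) ^ 2 - 4 * t * z)) =
      ∑ y : F, if t * z * y ^ 2 + -(z + 1) * y + 1 = 0 then η z else 0 := by
    intro z
    by_cases hz : z = 0
    · subst hz; simp
    · have := card_quad h2 (t * z) (-(z + 1)) 1 (mul_ne_zero ht0 hz)
      rw [show (-(z + 1)) ^ 2 - 4 * (t * z) * 1 = (z + 1) ^ 2 - 4 * t * z by ring] at this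
      rw [← this, Finset.mul_sum]
      exact Finset.sum_congr rfl fun y _ => by simp
  have e : ∑ z : F, η z * qc ((z + 1) ^ 2 - 4 * t * z)
      = ∑ z : F, η z * (1 + qc ((z + 1) ^ 2 - 4 * t * z)) := by
    simp_rw [mul_add, mul_one]
    rw [Finset.sum_add_distrib, eta_sum η hη, zero_add]
  rw [e]
  simp_rw [key]
  rw [Finset.sum_comm]
  refine Finset.sum_congr rfl fun y _ => ?_
  by_cases hy0 : y = 0
  · subst hy0; simp
  by_cases hyt : 1 - t * y = 0
  · rw [hyt]
    symm
    rw [show η (y ^ 2 * (1 - y) * 0 ^ 2) = 0 by simp]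
    apply Finset.sum_eq_zero
    intro z _
    rw [if_neg]
    intro h
    have hy1 : y = 1 := by linear_combination -h - z * y * hyt
    rw [hy1] at hyt
    apply ht1; linear_combination -hyt
  have hne : y * (1 - t * y) ≠ 0 := mul_ne_zero hy0 hyt
  have : ∀ z : F, (t * z * y ^ 2 + -(z + 1) * y + 1 = 0) ↔ z = (1 - y) / (y * (1 - t * y)) := by
    intro z
    rw [eq_div_iff hne]
    constructor
    · intro h; linear_combination -h
    · intro h; linear_combination -h
  simp_rw [this]
  rw [Finset.sum_ite_eq' Finset.univ]
  simp only [Finset.mem_univ, if_true]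
  have : y ^ 2 * (1 - y) * (1 - t * y) ^ 2
      = (y * (1 - t * y)) ^ 3 * ((1 - y) / (y * (1 - t * y))) := by
    field_simp
  rw [this, map_mul, map_pow, eta_cube η hη hne, one_mul]

lemma eta_neg_one (η : MulChar F ℂ) (hη : orderOf η = 3) : η (-1) = 1 := by
  have h := eta_cube η hη (z := (-1 : F)) (by simp)
  have h2 : η (-1) ^ 2 = 1 := by rw [← map_pow]; simp
  linear_combination h - η (-1) * h2

lemma Ssum_symm (η : MulChar F ℂ) (hη : orderOf η = 3) (h2 : (2 : F) ≠ 0)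
    {t : F} (ht0 : t ≠ 0) (ht1 : t ≠ 1) : Ssum η t = Ssum η (1 - t) := by
  rw [Ssum_quad η hη h2 ht0 ht1, Ssum_quad η hη h2 (sub_ne_zero.2 (Ne.symm ht1))
    (by intro h; apply ht0; linear_combination -h)]
  refine Fintype.sum_equiv (Equiv.neg F) _ _ ?_
  intro z
  simp only [Equiv.neg_apply]
  rw [show η (-z) = η z by
    rw [neg_eq_neg_one_mul, map_mul, eta_neg_one η hη, one_mul]]
  congr 2
  ring

lemma sum_qc_quad (h2 : (2 : F) ≠ 0) {t : F} (ht0 : t ≠ 0) :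
    ∑ c : F, qc ((c + 2) * (c + 2 - 4 * t)) = -1 := by
  have h4t : 4 * t ≠ 0 := by
    rw [show (4 : F) * t = 2 * (2 * t) by ring]
    exact mul_ne_zero h2 (mul_ne_zero h2 ht0)
  have e1 : ∑ c : F, qc ((c + 2) * (c + 2 - 4 * t))
      = ∑ d : F, if d = 0 then 0 else qc (1 - 4 * t * d) := by
    refine Fintype.sum_equiv ((Equiv.addRight (2 : F)).trans (Equiv.inv F)) _ _ ?_
    intro c
    simp only [Equiv.trans_apply, Equiv.coe_addRight, Equiv.inv_apply, inv_eq_zero]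
    by_cases hc : c + 2 = 0
    · simp [hc, qc_zero]
    · rw [if_neg hc]
      apply qc_eq_of_sq_mul hc
      field_simp
  have e2 : ∑ d : F, qc (1 - 4 * t * d) = 0 := by
    rw [← qc_sum (F := F) h2]
    refine Fintype.sum_equiv ((Equiv.mulLeft₀ (4 * t) h4t).trans (Equiv.subLeft 1)) _ _ ?_
    intro d
    simp
  have e3 : (∑ d : F, if d = 0 then 0 else qc (1 - 4 * t * d))
      = ∑ d : F, qc (1 - 4 * t * d) - ∑ d : F, if d = 0 then (1 : ℂ) else 0 := by
    rw [← Finset.sum_sub_distrib]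
    refine Finset.sum_congr rfl fun d _ => ?_
    by_cases hd : d = 0
    · subst hd
      have : qc (1 : F) = 1 := by simp [qc]
      simp [this]
    · simp [hd]
  rw [e1, e3, e2]
  simp

/-- Elliptic-curve character sum. -/
noncomputable def Hsum (t : F) : ℂ := ∑ v : F, qc (-4 * t * v ^ 3 + (3 * v - 1) ^ 2)

lemma Ssum_eq_Hsum (η : MulChar F ℂ) (hη : orderOf η = 3) (h2 : (2 : F) ≠ 0) (h3 : (3 : F) ≠ 0)
    {w : F} (hw : w ^ 2 + w + 1 = 0)
    {t : F} (ht0 : t ≠ 0) (ht1 : t ≠ 1) : Ssum η t = Hsum t := by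
  have hs : (2 * w + 1) ^ 2 = -3 := by linear_combination 4 * hw
  have hs0 : 2 * w + 1 ≠ 0 := by
    intro h; rw [h] at hs; apply h3; linear_combination hs
  have hc := cardano η hη h2 h3 hw (fun c => qc ((c + 2) * (c + 2 - 4 * t)))
  rw [sum_qc_quad h2 ht0] at hc
  have e1 : ∑ z : F, η z * qc ((z + 1) ^ 2 - 4 * t * z)
      = ∑ z : F, η z * qc ((z + z⁻¹ + 2) * (z + z⁻¹ + 2 - 4 * t)) + qc t := by
    have : qc t = ∑ z : F, if z = -1 then qc t else 0 := by simp
    rw [this, ← Finset.sum_add_distrib]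
    refine Finset.sum_congr rfl fun z _ => ?_
    by_cases hz0 : z = 0
    · subst hz0; simp
    by_cases hz : z = -1
    · subst hz
      have : qc ((-1 + 1) ^ 2 - 4 * t * -1) = qc t :=
        qc_eq_of_sq_mul h2 (by ring)
      rw [this, eta_neg_one η hη]
      have h0 : (-1 : F) + (-1)⁻¹ + 2 = 0 := by rw [inv_neg, inv_one]; ring
      rw [h0]; simp [qc_zero]
    · rw [if_neg hz, add_zero]
      congr 1
      have hz1 : z + 1 ≠ 0 := by intro h; apply hz; linear_combination h
      symm
      apply qc_eq_of_sq_mul (a := (z + 1) / z) (div_ne_zero hz1 hz0)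
      field_simp
      ring
  have e2 : ∑ x : F, qc ((x ^ 3 - 3 * x + 2) * (x ^ 3 - 3 * x + 2 - 4 * t))
      = ∑ x : F, qc ((x + 2) * (x ^ 3 - 3 * x + 2 - 4 * t)) - qc t := by
    have : qc t = ∑ z : F, if z = 1 then qc t else 0 := by simp
    rw [this, ← Finset.sum_sub_distrib]
    refine Finset.sum_congr rfl fun x _ => ?_
    by_cases hx : x = 1
    · subst hx
      have h0 : (1 : F) ^ 3 - 3 * 1 + 2 = 0 := by ring
      have : qc (((1 : F) + 2) * (1 ^ 3 - 3 * 1 + 2 - 4 * t)) = qc t := by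
        apply qc_eq_of_sq_mul (mul_ne_zero h2 hs0)
        linear_combination -4 * t * hs
      rw [this, h0]; simp [qc_zero]
    · rw [if_neg hx, sub_zero]
      apply qc_eq_of_sq_mul (sub_ne_zero.2 hx)
      ring
  have e3 : Hsum t = ∑ x : F, qc ((x + 2) * (x ^ 3 - 3 * x + 2 - 4 * t)) + 1 := by
    have : (1 : ℂ) = ∑ x : F, if x = -2 then 1 else 0 := by simp
    rw [this, ← Finset.sum_add_distrib, Hsum]
    symm
    refine Fintype.sum_equiv ((Equiv.addRight (2 : F)).trans (Equiv.inv F)) _ _ ?_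
    intro x
    simp only [Equiv.trans_apply, Equiv.coe_addRight, Equiv.inv_apply]
    by_cases hx : x = -2
    · subst hx
      have : qc (1 : F) = 1 := by simp [qc]
      simp [qc_zero, this]
    · have hx2 : x + 2 ≠ 0 := by intro h; apply hx; linear_combination h
      rw [if_neg hx, add_zero]
      apply qc_eq_of_sq_mul (a := (x + 2) ^ 2) (pow_ne_zero 2 hx2)
      field_simp
      ring
  rw [Ssum_quad η hη h2 ht0 ht1, e1, hc, e2, e3]
  ring

lemma Hsum_iso (h3 : (3 : F) ≠ 0) {w : F} (hw : w ^ 2 + w + 1 = 0) {l : F}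
    (hl0 : l ≠ 0) (hl1 : l ≠ 1) (hl : 1 + 2 * l ≠ 0) :
    Hsum (1 - l ^ 3) = Hsum (1 - ((1 - l) / (1 + 2 * l)) ^ 3) := by
  have hs : (2 * w + 1) ^ 2 = -3 := by linear_combination 4 * hw
  have hs0 : 2 * w + 1 ≠ 0 := by
    intro h; rw [h] at hs; apply h3; linear_combination hs
  have hl1' : 1 - l ≠ 0 := sub_ne_zero.2 (Ne.symm hl1)
  have ha : -3 * l / ((1 + 2 * l) * (1 - l)) ≠ 0 :=
    div_ne_zero (mul_ne_zero (neg_ne_zero.2 h3) hl0) (mul_ne_zero hl hl1')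
  symm
  refine Fintype.sum_equiv ((Equiv.mulLeft₀ _ ha).trans (Equiv.addRight (1 - l)⁻¹)) _ _ ?_
  intro v
  simp only [Equiv.trans_apply, Equiv.coe_addRight, Equiv.mulLeft₀_apply]
  symm
  apply qc_eq_of_sq_mul (a := (2 * w + 1) * (l / (1 - l))) (mul_ne_zero hs0 (div_ne_zero hl0 hl1'))
  rw [mul_pow, hs]
  obtain ⟨d, hd⟩ : ∃ d, d = 1 + 2 * l := ⟨_, rfl⟩
  obtain ⟨e, he⟩ : ∃ e, e = 1 - l := ⟨_, rfl⟩
  rw [← hd, ← he]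
  rw [← hd] at hl
  rw [← he] at hl1'
  field_simp
  rw [hd, he]
  ring

lemma P1_eq_Ssum (η : MulChar F ℂ) (hη : orderOf η = 3) (t : F) :
    P1 (η ^ 2) η 1 t = Ssum η t := by
  have h3 : η ^ 3 = 1 := by rw [← hη]; exact pow_orderOf_eq_one η
  have h1 : (1 : MulChar F ℂ) * (η ^ 2)⁻¹ = η := by
    rw [one_mul, inv_eq_iff_mul_eq_one, ← pow_succ, h3]
  have h2 : η⁻¹ = η ^ 2 := by
    rw [inv_eq_iff_mul_eq_one, ← pow_succ', h3]
  unfold P1 Ssum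
  rw [h1, h2]
  refine Finset.sum_congr rfl fun y _ => ?_
  rw [MulChar.pow_apply' η (by norm_num), MulChar.pow_apply' η (by norm_num)]
  simp

lemma Ssum_zero (η : MulChar F ℂ) (hη : orderOf η = 3) : Ssum η 0 = Ssum η 1 := by
  have hsum := eta_sum η hη
  have e0 : Ssum η 0 = -1 := by
    have a1 : Ssum η 0 = ∑ y : F, if y = 0 then 0 else η (y⁻¹ - 1) := by
      refine Finset.sum_congr rfl fun y _ => ?_
      by_cases hy : y = 0
      · subst hy; simp
      · rw [if_neg hy, show y ^ 2 * (1 - y) * (1 - 0 * y) ^ 2 = y ^ 3 * (y⁻¹ - 1) by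
          field_simp; ring, map_mul, map_pow, eta_cube η hη hy, one_mul]
    have a2 : (∑ y : F, if y = 0 then 0 else η (y⁻¹ - 1))
        = ∑ y : F, η (y⁻¹ - 1) - ∑ y : F, if y = 0 then (1 : ℂ) else 0 := by
      rw [← Finset.sum_sub_distrib]
      refine Finset.sum_congr rfl fun y _ => ?_
      by_cases hy : y = 0
      · subst hy; simp [eta_neg_one η hη]
      · simp [hy]
    have a3 : ∑ y : F, η (y⁻¹ - 1) = 0 := by
      rw [← hsum]
      exact Fintype.sum_equiv ((Equiv.inv F).trans (Equiv.subRight 1)) _ _ (fun y => by simp)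
    rw [a1, a2, a3]; simp
  have e1 : Ssum η 1 = -1 := by
    have a1 : Ssum η 1 = ∑ y : F, η y⁻¹ - ∑ y : F, if y = 1 then (1 : ℂ) else 0 := by
      rw [← Finset.sum_sub_distrib]
      refine Finset.sum_congr rfl fun y _ => ?_
      by_cases hy : y = 1
      · subst hy; simp
      · have hy1 : 1 - y ≠ 0 := sub_ne_zero.2 (Ne.symm hy)
        by_cases hy0 : y = 0
        · subst hy0; simp
        · rw [if_neg hy, show y ^ 2 * (1 - y) * (1 - 1 * y) ^ 2 = y ^ 2 * (1 - y) ^ 3 by ring,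
            map_mul, map_pow, map_pow, eta_cube η hη hy1, eta_inv η hη hy0]
          simp
    have a3 : ∑ y : F, η y⁻¹ = 0 := by
      rw [← hsum]
      exact Fintype.sum_equiv (Equiv.inv F) _ _ (fun y => by simp)
    rw [a1, a3]; simp
  rw [e0, e1]

lemma Ssum_main (η : MulChar F ℂ) (hη : orderOf η = 3) (h2 : (2 : F) ≠ 0) (h3 : (3 : F) ≠ 0)
    {w : F} (hw : w ^ 2 + w + 1 = 0) {l : F} (hl : 1 + 2 * l ≠ 0) :
    Ssum η (1 - l ^ 3) = Ssum η (((1 - l) / (1 + 2 * l)) ^ 3) := by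
  by_cases hl0 : l = 0
  · subst hl0; simp
  by_cases hl1 : l = 1
  · subst hl1; simp
  have hl1' : 1 - l ≠ 0 := sub_ne_zero.2 (Ne.symm hl1)
  by_cases hq : 1 + l + l ^ 2 = 0
  · have a : 1 - l ^ 3 = 0 := by linear_combination (1 - l) * hq
    have b : ((1 - l) / (1 + 2 * l)) ^ 3 = 1 := by
      rw [div_pow, div_eq_one_iff_eq (pow_ne_zero 3 hl)]
      linear_combination (-9 * l) * hq
    rw [a, b, Ssum_zero η hη]
  have hne : 1 - ((1 - l) / (1 + 2 * l)) ^ 3 = 9 * l * (1 + l + l ^ 2) / (1 + 2 * l) ^ 3 := by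
    rw [div_pow, eq_div_iff (pow_ne_zero 3 hl), sub_mul, div_mul_cancel₀ _ (pow_ne_zero 3 hl)]
    ring
  have h9 : (9 : F) ≠ 0 := by
    rw [show (9 : F) = 3 * 3 by norm_num]; exact mul_ne_zero h3 h3
  have t0 : 1 - ((1 - l) / (1 + 2 * l)) ^ 3 ≠ 0 := by
    rw [hne]
    exact div_ne_zero (mul_ne_zero (mul_ne_zero h9 hl0) hq) (pow_ne_zero 3 hl)
  have m0 : ((1 - l) / (1 + 2 * l)) ^ 3 ≠ 0 := pow_ne_zero 3 (div_ne_zero hl1' hl)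
  have s0 : 1 - l ^ 3 ≠ 0 := by
    rw [show 1 - l ^ 3 = (1 - l) * (1 + l + l ^ 2) by ring]
    exact mul_ne_zero hl1' hq
  have s1 : 1 - l ^ 3 ≠ 1 := by
    intro h; apply pow_ne_zero 3 hl0; linear_combination -h
  rw [Ssum_symm η hη h2 m0 (by intro h; apply t0; rw [h]; ring),
    Ssum_eq_Hsum η hη h2 h3 hw s0 s1,
    Ssum_eq_Hsum η hη h2 h3 hw t0 (by intro h; apply m0; linear_combination -h)]
  exact Hsum_iso h3 hw hl0 hl1 hl

end CubicAux

/-- finite-field analogue of the Borwein cubic transformation for `₂F₁`. -/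
theorem statement_2 (p : ℕ) [Fact p.Prime] (hp : p % 3 = 1)
    (η₃ : MulChar (ZMod p) ℂ) (hη : orderOf η₃ = 3)
    (lam : ZMod p) (h : 1 + 2 * lam ≠ 0) :
    twoF1 η₃ (η₃ ^ 2) 1 (1 - lam ^ 3) =
      twoF1 η₃ (η₃ ^ 2) 1 (((1 - lam) / (1 + 2 * lam)) ^ 3) := by
  have hpp : p.Prime := Fact.out
  have h2 : (2 : ZMod p) ≠ 0 := by
    intro h0
    have h0' : ((2 : ℕ) : ZMod p) = 0 := by exact_mod_cast h0
    rw [ZMod.natCast_eq_zero_iff] at h0'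
    have := (Nat.prime_dvd_prime_iff_eq hpp Nat.prime_two).1 h0'
    omega
  have h3 : (3 : ZMod p) ≠ 0 := by
    intro h0
    have h0' : ((3 : ℕ) : ZMod p) = 0 := by exact_mod_cast h0
    rw [ZMod.natCast_eq_zero_iff] at h0'
    have := (Nat.prime_dvd_prime_iff_eq hpp Nat.prime_three).1 h0'
    omega
  obtain ⟨w, hw⟩ : ∃ w : ZMod p, w ^ 2 + w + 1 = 0 := by
    haveI : Fact (Nat.Prime 3) := ⟨Nat.prime_three⟩
    have hd : 3 ∣ Fintype.card (ZMod p)ˣ := by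
      rw [ZMod.card_units]; omega
    obtain ⟨g, hg⟩ := exists_prime_orderOf_dvd_card 3 hd
    refine ⟨(g : ZMod p), ?_⟩
    have hg3 : (g : ZMod p) ^ 3 = 1 := by
      have := pow_orderOf_eq_one g
      rw [hg] at this
      rw [← Units.val_pow_eq_pow_val, this, Units.val_one]
    have hg1 : (g : ZMod p) - 1 ≠ 0 := by
      intro h0
      have : g = 1 := Units.ext (by simpa using sub_eq_zero.1 h0)
      rw [this] at hg; simp at hg
    apply (mul_eq_zero.1 (?_ : ((g : ZMod p) - 1) * ((g : ZMod p) ^ 2 + g + 1) = 0)).resolve_left hg1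
    linear_combination hg3
  unfold twoF1
  rw [P1_eq_Ssum η₃ hη, P1_eq_Ssum η₃ hη, Ssum_main η₃ hη h2 h3 hw h]
end

section
/- Let q be a power of an odd prime. Let A, B₁, B₂, C be multiplicative characters of 𝔽_q^× with A ≠ ε, B₁B₂ ≠ ε, A ≠ C, and B₁B₂ ≠ C. Then for any λ ∈ 𝔽_q, ℙ_D^{(2)}[A; B₁, B₂; C; λ, λ] = (C·(AB₁B₂)⁻¹)(1−λ) · ( J(A, CĀ) / J(C·(B₁B₂)⁻¹, B₁B₂) ) · ℙ_D^{(1)}[C·(B₁B₂)⁻¹; C·Ā; C; λ] + δ(1−λ)·J(A, (AB₁B₂)⁻¹·C). -/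
open Finset

section helpers

variable {F : Type} [Field F] [Fintype F]

open scoped Classical in
/-- Modified Gauss sum: the value at the trivial character is `-q`. -/
noncomputable def hGauss (ψ : AddChar F ℂ) (Z : MulChar F ℂ) : ℂ :=
  if Z = 1 then -(Fintype.card F : ℂ) else gaussSum Z ψ

lemma card_ne_zero' : (Fintype.card F : ℂ) ≠ 0 := by
  exact_mod_cast Fintype.card_ne_zero

lemma char_neg_one_sq (Z : MulChar F ℂ) : Z (-1) * Z (-1) = 1 := by
  rw [← map_mul]; simp

lemma gauss_mul_inv {ψ : AddChar F ℂ} (hψ : ψ.IsPrimitive) {Z : MulChar F ℂ} (hZ : Z ≠ 1) :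
    gaussSum Z ψ * gaussSum Z⁻¹ ψ = Z (-1) * Fintype.card F := by
  have h1 := gaussSum_mul_gaussSum_eq_card hZ hψ
  have h2 := mul_gaussSum_inv_eq_gaussSum Z⁻¹ ψ
  have h3 : Z⁻¹ (-1) = Z (-1) := by
    rw [MulChar.inv_apply']; norm_num
  rw [← h2, h3, ← h1]; ring

lemma gauss_ne_zero {ψ : AddChar F ℂ} (hψ : ψ.IsPrimitive) (Z : MulChar F ℂ) :
    gaussSum Z ψ ≠ 0 := by
  by_cases hZ : Z = 1
  · subst hZ
    rw [gaussSum_one_left]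
    · norm_num
    · intro h
      have := hψ (one_ne_zero)
      apply this
      rw [h]; ext; simp
  · exact gaussSum_ne_zero_of_nontrivial card_ne_zero' hZ hψ

lemma prim_ne_one {ψ : AddChar F ℂ} (hψ : ψ.IsPrimitive) : ψ ≠ 1 := by
  intro h
  apply hψ (one_ne_zero)
  rw [h]; ext; simp

lemma hGauss_ne_zero {ψ : AddChar F ℂ} (hψ : ψ.IsPrimitive) (Z : MulChar F ℂ) :
    hGauss ψ Z ≠ 0 := by
  unfold hGauss
  split_ifs
  · exact neg_ne_zero.mpr card_ne_zero'
  · exact gauss_ne_zero hψ Z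

lemma hGauss_inv_mul {ψ : AddChar F ℂ} (hψ : ψ.IsPrimitive) (Z : MulChar F ℂ) :
    hGauss ψ Z⁻¹ * gaussSum Z ψ = Z (-1) * Fintype.card F := by
  unfold hGauss
  split_ifs with h
  · rw [inv_eq_one] at h
    subst h
    rw [gaussSum_one_left (prim_ne_one hψ), MulChar.one_apply (by simp)]; ring
  · rw [inv_eq_one] at h
    rw [← gauss_mul_inv hψ h]; ring

lemma hGauss_jacobi {ψ : AddChar F ℂ} (hψ : ψ.IsPrimitive) (X : MulChar F ℂ) {Y : MulChar F ℂ}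
    (hY : Y ≠ 1) : hGauss ψ (X * Y) * jacobiSum' X Y = gaussSum X ψ * gaussSum Y ψ := by
  change hGauss ψ (X * Y) * jacobiSum X Y = _
  unfold hGauss
  split_ifs with h
  · have hX : X = Y⁻¹ := eq_inv_of_mul_eq_one_left h
    have h3 : Y⁻¹ (-1) = Y (-1) := by
      rw [MulChar.inv_apply']; norm_num
    rw [hX, jacobiSum_comm, jacobiSum_nontrivial_inv hY, mul_comm (gaussSum Y⁻¹ ψ),
      gauss_mul_inv hψ hY]
    ring
  · exact jacobiSum_mul_nontrivial h ψ

lemma jacobi_mul_gauss {ψ : AddChar F ℂ} (hψ : ψ.IsPrimitive) (χ : MulChar F ℂ) {b : MulChar F ℂ}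
    (hb : b ≠ 1) : jacobiSum' χ b⁻¹ * gaussSum b ψ
      = χ (-1) * gaussSum χ ψ * gaussSum (b * χ⁻¹) ψ := by
  have h1 := hGauss_jacobi hψ χ (inv_ne_one.mpr hb)
  have h2 := hGauss_inv_mul hψ (b * χ⁻¹)
  have h3 := gauss_mul_inv hψ hb
  have e : (b * χ⁻¹)⁻¹ = χ * b⁻¹ := by rw [mul_inv_rev, inv_inv]
  have e2 : (b * χ⁻¹) (-1) = b (-1) * χ (-1) := by
    rw [MulChar.mul_apply, MulChar.inv_apply']; norm_num
  rw [e, e2] at h2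
  have hbb := char_neg_one_sq b
  have hcc := char_neg_one_sq χ
  apply mul_left_cancel₀ (card_ne_zero' (F := F))
  generalize (Fintype.card F : ℂ) = q at *
  generalize hGauss ψ (χ * b⁻¹) = H at *
  generalize jacobiSum' χ b⁻¹ = J at *
  generalize gaussSum (b * χ⁻¹) ψ = G at *
  linear_combination (-q * J * gaussSum b ψ) * (hcc) - (q * J * gaussSum b ψ * χ (-1) * χ (-1)) * hbb
    - b (-1) * χ (-1) * J * gaussSum b ψ * h2 + b (-1) * χ (-1) * G * gaussSum b ψ * h1
    + b (-1) * χ (-1) * G * gaussSum χ ψ * h3 + q * χ (-1) * G * gaussSum χ ψ * hbb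

lemma S_eq {ψ : AddChar F ℂ} (hψ : ψ.IsPrimitive) (χ a b c : MulChar F ℂ)
    (hb : b ≠ 1) (hac : a ≠ c) (hbc : b ≠ c) :
    hGauss ψ (c * χ⁻¹) * hGauss ψ c *
      (jacobiSum' (a * χ⁻¹) (c * a⁻¹) * jacobiSum' χ b⁻¹ * jacobiSum' b (c * b⁻¹)) =
    χ (-1) * gaussSum (a * χ⁻¹) ψ * gaussSum (b * χ⁻¹) ψ * gaussSum (c * a⁻¹) ψ *
      gaussSum (c * b⁻¹) ψ * gaussSum χ ψ := by
  have ha' : c * a⁻¹ ≠ 1 := fun h => hac (mul_inv_eq_one.mp h).symm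
  have hb' : c * b⁻¹ ≠ 1 := fun h => hbc (mul_inv_eq_one.mp h).symm
  have h1 := hGauss_jacobi hψ (a * χ⁻¹) ha'
  have h2 := hGauss_jacobi hψ b hb'
  have h3 := jacobi_mul_gauss hψ χ hb
  rw [show a * χ⁻¹ * (c * a⁻¹) = c * χ⁻¹ by
    rw [mul_comm c, mul_comm a, mul_assoc, mul_inv_cancel_left, mul_comm]] at h1
  rw [show b * (c * b⁻¹) = c by rw [mul_comm c, mul_inv_cancel_left]] at h2
  calc _ = (hGauss ψ (c * χ⁻¹) * jacobiSum' (a * χ⁻¹) (c * a⁻¹)) *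
        (hGauss ψ c * jacobiSum' b (c * b⁻¹)) * jacobiSum' χ b⁻¹ := by ring
    _ = gaussSum (a * χ⁻¹) ψ * gaussSum (c * a⁻¹) ψ * gaussSum (c * b⁻¹) ψ *
        (jacobiSum' χ b⁻¹ * gaussSum b ψ) := by rw [h1, h2]; ring
    _ = _ := by rw [h3]; ring

lemma exists_prim : ∃ ψ : AddChar F ℂ, ψ.IsPrimitive :=
  ⟨AddChar.FiniteField.primitiveChar_to_Complex F,
    AddChar.FiniteField.primitiveChar_to_Complex_isPrimitive F⟩

lemma S_symm (χ a b c : MulChar F ℂ)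
    (ha : a ≠ 1) (hb : b ≠ 1) (hac : a ≠ c) (hbc : b ≠ c) :
    jacobiSum' (a * χ⁻¹) (c * a⁻¹) * jacobiSum' χ b⁻¹ * jacobiSum' b (c * b⁻¹) =
    jacobiSum' (b * χ⁻¹) (c * b⁻¹) * jacobiSum' χ a⁻¹ * jacobiSum' a (c * a⁻¹) := by
  obtain ⟨ψ, hψ⟩ := exists_prim (F := F)
  apply mul_left_cancel₀ (mul_ne_zero (hGauss_ne_zero hψ (c * χ⁻¹)) (hGauss_ne_zero hψ c))
  rw [S_eq hψ χ a b c hb hac hbc, S_eq hψ χ b a c ha hbc hac]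
  ring

lemma mellin_P1 (χ a b c : MulChar F ℂ) :
    ∑ l : F, χ l * P1 a b c l = jacobiSum' (a * χ⁻¹) (c * a⁻¹) * jacobiSum' χ b⁻¹ := by
  unfold P1
  simp_rw [Finset.mul_sum]
  rw [Finset.sum_comm]
  rw [jacobiSum', Finset.sum_mul]
  refine Finset.sum_congr rfl fun y _ => ?_
  by_cases hy : y = 0
  · subst hy; simp [MulChar.map_zero]
  · rw [jacobiSum', Finset.mul_sum]
    refine Fintype.sum_equiv (Equiv.mulRight₀ y hy) _ _ fun l => ?_
    have e : (Equiv.mulRight₀ y hy) l = l * y := rfl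
    simp only [e, MulChar.mul_apply, map_mul]
    have : χ⁻¹ y * χ y = 1 := by
      rw [← MulChar.mul_apply, inv_mul_cancel, MulChar.one_apply (isUnit_iff_ne_zero.mpr hy)]
    linear_combination (-(χ l * a y * c (1 - y) * a⁻¹ (1 - y) * b⁻¹ (1 - l * y))) * this

lemma sum_char_eq_zero {x : F} (hx : x ≠ 1) : ∑ χ : MulChar F ℂ, χ x = 0 := by
  obtain ⟨χ₀, h⟩ := MulChar.exists_apply_ne_one_of_hasEnoughRootsOfUnity F ℂ hx
  have : χ₀ x * ∑ χ : MulChar F ℂ, χ x = ∑ χ : MulChar F ℂ, χ x := by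
    rw [Finset.mul_sum]
    refine Fintype.sum_equiv (Equiv.mulLeft χ₀) _ _ fun χ => ?_
    simp [MulChar.mul_apply]
  have h2 : (χ₀ x - 1) * ∑ χ : MulChar F ℂ, χ x = 0 := by linear_combination this
  exact (mul_eq_zero.mp h2).resolve_left (sub_ne_zero.mpr h)

lemma mellin_inj (D : F → ℂ) (hD : ∀ χ : MulChar F ℂ, ∑ l : F, χ l * D l = 0) {m : F}
    (hm : m ≠ 0) : D m = 0 := by
  have h : ∑ χ : MulChar F ℂ, χ m⁻¹ * ∑ l : F, χ l * D l = 0 := by simp [hD]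
  simp_rw [Finset.mul_sum] at h
  rw [Finset.sum_comm] at h
  rw [Finset.sum_eq_single m] at h
  · have e : ∀ χ : MulChar F ℂ, χ m⁻¹ * (χ m * D m) = D m := fun χ => by
      rw [← mul_assoc, ← map_mul, inv_mul_cancel₀ hm, map_one, one_mul]
    simp_rw [e] at h
    simpa using h
  · intro l _ hl
    simp_rw [← mul_assoc, ← map_mul]
    rw [← Finset.sum_mul, sum_char_eq_zero, zero_mul]
    intro h1
    apply hl
    rw [inv_mul_eq_one₀ hm] at h1
    exact h1.symm
  · simp

lemma P1_symm (a b c : MulChar F ℂ)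
    (ha : a ≠ 1) (hb : b ≠ 1) (hac : a ≠ c) (hbc : b ≠ c) (l : F) :
    P1 a b c l * jacobiSum' b (c * b⁻¹) = P1 b a c l * jacobiSum' a (c * a⁻¹) := by
  by_cases hl : l = 0
  · subst hl
    simp [P1, jacobiSum', mul_comm]
  · rw [← sub_eq_zero]
    refine mellin_inj (fun l => P1 a b c l * jacobiSum' b (c * b⁻¹)
      - P1 b a c l * jacobiSum' a (c * a⁻¹)) (fun χ => ?_) hl
    simp_rw [mul_sub, ← mul_assoc]
    rw [Finset.sum_sub_distrib, ← Finset.sum_mul, ← Finset.sum_mul, mellin_P1, mellin_P1,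
      S_symm χ a b c ha hb hac hbc, sub_self]

lemma P1_euler (A B C : MulChar F ℂ) {l : F} (hl : 1 - l ≠ 0) :
    P1 A B C l = (C * (A * B)⁻¹) (1 - l) * P1 (C * A⁻¹) (C * B⁻¹) C l := by
  classical
  unfold P1
  rw [Finset.mul_sum]
  have key : ∀ y : F, 1 - l * y ≠ 0 → 1 - l * ((1 - y) / (1 - l * y)) = (1 - l) / (1 - l * y) := by
    intro y hy
    field_simp
    ring
  have key2 : ∀ y : F, 1 - l * y ≠ 0 → 1 - (1 - y) / (1 - l * y) = y * (1 - l) / (1 - l * y) := by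
    intro y hy
    rw [eq_div_iff hy, sub_mul, div_mul_cancel₀ _ hy]
    ring
  have inv : ∀ y : F, 1 - l * y ≠ 0 →
      (1 - (1 - y) / (1 - l * y)) / (1 - l * ((1 - y) / (1 - l * y))) = y := by
    intro y hy
    rw [key y hy, key2 y hy, div_div_div_cancel_right₀ hy, mul_div_cancel_right₀ _ hl]
  rw [← Finset.sum_filter_of_ne (p := fun y => 1 - l * y ≠ 0),
    ← Finset.sum_filter_of_ne (s := Finset.univ) (p := fun y => 1 - l * y ≠ 0) (f := fun y =>
      (C * (A * B)⁻¹) (1 - l) * _)]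
  · refine Finset.sum_nbij' (fun y => (1 - y) / (1 - l * y)) (fun y => (1 - y) / (1 - l * y))
      ?_ ?_ ?_ ?_ ?_
    · intro y hy
      simp only [Finset.mem_filter, Finset.mem_univ, true_and] at hy ⊢
      rw [key y hy]; exact div_ne_zero hl hy
    · intro y hy
      simp only [Finset.mem_filter, Finset.mem_univ, true_and] at hy ⊢
      rw [key y hy]; exact div_ne_zero hl hy
    · intro y hy
      simp only [Finset.mem_filter, Finset.mem_univ, true_and] at hy
      exact inv y hy
    · intro y hy
      simp only [Finset.mem_filter, Finset.mem_univ, true_and] at hy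
      exact inv y hy
    · intro y hy
      simp only [Finset.mem_filter, Finset.mem_univ, true_and] at hy
      rw [key y hy, key2 y hy]
      have e1 : C * (C * A⁻¹)⁻¹ = A := by simp
      have e2 : (C * B⁻¹)⁻¹ = B * C⁻¹ := by simp
      have e3 : (A * B)⁻¹ = A⁻¹ * B⁻¹ := mul_inv A B
      rw [e1, e2, e3]
      simp only [MulChar.mul_apply, MulChar.inv_apply', div_eq_mul_inv, map_mul, mul_inv, inv_inv]
      have n1 : ∀ Z : MulChar F ℂ, Z (1 - l) * Z (1 - l)⁻¹ = 1 := fun Z => by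
        rw [← map_mul, mul_inv_cancel₀ hl, map_one]
      have n2 : ∀ Z : MulChar F ℂ, Z (1 - l * y) * Z (1 - l * y)⁻¹ = 1 := fun Z => by
        rw [← map_mul, mul_inv_cancel₀ hy, map_one]
      symm
      calc _ = A y * (C (1 - y) * A (1 - y)⁻¹) * B (1 - l * y)⁻¹ *
            (C (1 - l) * C (1 - l)⁻¹) * (A (1 - l) * A (1 - l)⁻¹) * (B (1 - l) * B (1 - l)⁻¹) *
            (C (1 - l * y) * C (1 - l * y)⁻¹) * (A (1 - l * y) * A (1 - l * y)⁻¹) := by ring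
        _ = _ := by rw [n1, n1, n1, n2, n2]; ring
  · intro y _ h h0
    apply h; rw [h0, MulChar.map_zero]; simp
  · intro y _ h h0
    apply h; rw [h0, MulChar.map_zero]; simp

end helpers

/-- reduction formula for `ℙ_D^{(2)}` when `λ₁ = λ₂`. -/
theorem statement_12 (F : Type) [Field F] [Fintype F] (hq : Odd (Fintype.card F))
    (A B₁ B₂ C : MulChar F ℂ) (hA : A ≠ 1) (hB : B₁ * B₂ ≠ 1)
    (hAC : A ≠ C) (hBC : B₁ * B₂ ≠ C) (l : F) :
    P2 A B₁ B₂ C l l =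
      (C * (A * B₁ * B₂)⁻¹) (1 - l) *
          (jacobiSum' A (C * A⁻¹) / jacobiSum' (C * (B₁ * B₂)⁻¹) (B₁ * B₂)) *
          P1 (C * (B₁ * B₂)⁻¹) (C * A⁻¹) C l +
        deltaC (1 - l) * jacobiSum' A ((A * B₁ * B₂)⁻¹ * C) := by
  have hP2 : P2 A B₁ B₂ C l l = P1 A (B₁ * B₂) C l := by
    unfold P2 P1
    refine Finset.sum_congr rfl fun y _ => ?_
    rw [mul_inv, MulChar.mul_apply B₁⁻¹]; ring
  rw [hP2, mul_assoc A]
  generalize B₁ * B₂ = B at *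
  by_cases hl : 1 - l = 0
  · have : l = 1 := (sub_eq_zero.mp hl).symm
    subst this
    simp only [sub_self, MulChar.map_zero, zero_mul, zero_add, deltaC, if_true, one_mul]
    unfold P1 jacobiSum'
    refine Finset.sum_congr rfl fun y _ => ?_
    rw [mul_inv]
    simp only [MulChar.mul_apply, one_mul]
    ring
  · rw [P1_euler A B C hl]
    have hd : deltaC (1 - l) = 0 := by simp [deltaC, hl]
    rw [hd, zero_mul, add_zero]
    have c1 : C * (C * A⁻¹)⁻¹ = A := by simp
    have c2 : C * (C * B⁻¹)⁻¹ = B := by simp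
    have h := P1_symm (C * A⁻¹) (C * B⁻¹) C (fun h => hAC (mul_inv_eq_one.mp h).symm)
      (fun h => hBC (mul_inv_eq_one.mp h).symm) (by simpa using hA) (by simpa using hB) l
    rw [c1, c2] at h
    have hJ : jacobiSum' (C * B⁻¹) B ≠ 0 := by
      obtain ⟨ψ, hψ⟩ := exists_prim (F := F)
      have := hGauss_jacobi hψ (C * B⁻¹) hB
      exact right_ne_zero_of_mul (this ▸ mul_ne_zero (gauss_ne_zero hψ _) (gauss_ne_zero hψ _))
    have hc : jacobiSum' A (C * A⁻¹) = jacobiSum' (C * A⁻¹) A := jacobiSum_comm _ _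
    rw [hc, mul_assoc]
    congr 1
    rw [div_mul_eq_mul_div, eq_div_iff hJ, h, mul_comm]
end
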